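/- Let 0 < α < 1. Let u : ℝ → ℝ be nonnegative, belong to 𝓛_α(ℝ), and be locally Hölder continuous of order α + ε for some ε > 0 with α + ε ≤ 1. Let f : ℝ → ℝ be nonnegative, measurable and locally bounded. Assume that for every t ∈ ℝ the integral ∫_{−∞}^t (u(t) − u(τ))/(t−τ)^{1+α} dτ converges absolutely and C_α times it equals f(t) (i.e. ∂_t^α u = f on ℝ), where C_α = 1/|Γ(−α)|. Then there exists a constant c₀ ≥ 0 such that for every t ∈ ℝ the integral ∫_{−∞}^t f(τ)(t−τ)^{α−1} dτ is finite and u(t) = c₀ + (1/Γ(α)) ∫_{−∞}^t f(τ)(t−τ)^{α−1} dτ. -/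

import Mathlib

open MeasureTheory Set Filter Topology

/-- The Mellin transform of `1 / (1 + q)` on `0 < α < 1`. -/
theorem integrable_and_integral_rpow_sub_one_div_one_add {α : ℝ} (hα0 : 0 < α) (hα1 : α < 1) :
    IntegrableOn (fun q : ℝ => q ^ (α - 1) / (1 + q)) (Ioi 0) ∧
      ∫ q in Ioi (0 : ℝ), q ^ (α - 1) / (1 + q) = Real.Gamma α * Real.Gamma (1 - α) := by
  let F : ℝ → ℝ → ℝ := fun x q => q ^ (α - 1) * Real.exp (-(x * (1 + q)))
  have hinner : ∀ x ∈ Ioi (0 : ℝ), IntegrableOn (F x) (Ioi 0) ∧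
      ∫ q in Ioi (0 : ℝ), F x q = Real.Gamma α * (Real.exp (-x) * x ^ (1 - α - 1)) := by
    intro x hx
    have hx : 0 < x := hx
    have hF : F x = fun q => Real.exp (-x) * (q ^ (α - 1) * Real.exp (-(x * q))) := by
      funext q
      simp only [F]
      rw [show -(x * (1 + q)) = -x + -(x * q) by ring, Real.exp_add]
      ring
    have hval := Real.integral_rpow_mul_exp_neg_mul_Ioi hα0 hx
    rw [hF]
    refine ⟨Integrable.const_mul ?_ _, ?_⟩
    · refine not_imp_comm.1 integral_undef ?_
      rw [hval]
      have := Real.Gamma_pos_of_pos hα0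
      positivity
    · rw [integral_const_mul, hval, one_div, Real.inv_rpow hx.le, ← Real.rpow_neg hx.le,
        show 1 - α - 1 = -α by ring]
      ring
  have houter : ∀ q ∈ Ioi (0 : ℝ), ∫ x in Ioi (0 : ℝ), F x q = q ^ (α - 1) / (1 + q) := by
    intro q hq
    have hq : 0 < q := hq
    simp only [F]
    rw [integral_const_mul]
    have := integral_exp_mul_Ioi (a := -(1 + q)) (by linarith) 0
    rw [show (fun x : ℝ => Real.exp (-(x * (1 + q)))) = fun x => Real.exp (-(1 + q) * x) by
      funext x; congr 1; ring, this]
    simp only [mul_zero, Real.exp_zero]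
    field_simp
  have hint : Integrable (Function.uncurry F)
      ((volume.restrict (Ioi 0)).prod (volume.restrict (Ioi 0))) := by
    rw [integrable_prod_iff]
    · refine ⟨?_, ?_⟩
      · filter_upwards [ae_restrict_mem measurableSet_Ioi] with x hx using (hinner x hx).1
      · have hG := (Real.GammaIntegral_convergent (s := 1 - α) (by linarith)).const_mul
          (Real.Gamma α)
        refine hG.congr ?_
        filter_upwards [ae_restrict_mem measurableSet_Ioi] with x hx
        rw [← (hinner x hx).2]
        refine setIntegral_congr_fun measurableSet_Ioi fun q hq => ?_
        have hq : 0 < q := hq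
        simp only [Function.uncurry, F]
        rw [Real.norm_of_nonneg (by positivity)]
    · refine Measurable.aestronglyMeasurable ?_
      simp only [F, Function.uncurry_def]
      fun_prop
  refine ⟨?_, ?_⟩
  · refine hint.integral_prod_right.congr ?_
    filter_upwards [ae_restrict_mem measurableSet_Ioi] with q hq using houter q hq
  · rw [← setIntegral_congr_fun measurableSet_Ioi houter, ← integral_integral_swap hint,
      setIntegral_congr_fun measurableSet_Ioi fun x hx => (hinner x hx).2, integral_const_mul,
      ← Real.Gamma_eq_integral (by linarith)]

theorem integral_sub_rpow_mul_sub_rpow {α a b t : ℝ} (hα0 : 0 < α)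
    (hba : b < a) (hat : a ≤ t) :
    ∫ s in a..t, (t - s) ^ (α - 1) * (s - b) ^ (-1 - α) =
        ((t - a) / (a - b)) ^ α / (α * (t - b)) := by
  have hbt : 0 < t - b := by linarith
  let G : ℝ → ℝ := fun s => -(((t - s) / (s - b)) ^ α / (α * (t - b)))
  have hcont : ContinuousOn G (Icc a t) := by
    refine ((ContinuousOn.rpow_const (ContinuousOn.div (by fun_prop) (by fun_prop) ?_) ?_).div_const
      _).neg
    · intro s hs; have := hs.1; linarith
    · intro s hs; exact Or.inr hα0.le
  have hderiv : ∀ s ∈ Ioo a t,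
      HasDerivAt G ((t - s) ^ (α - 1) * (s - b) ^ (-1 - α)) s := by
    intro s hs
    have h1 : 0 < t - s := by linarith [hs.2]
    have h2 : 0 < s - b := by linarith [hs.1]
    have hq : HasDerivAt (fun s : ℝ => (t - s) / (s - b))
        (((-1) * (s - b) - (t - s) * 1) / (s - b) ^ 2) s :=
      ((hasDerivAt_id s).const_sub t).div ((hasDerivAt_id s).sub_const b) h2.ne'
    have := ((hq.rpow_const (p := α) (Or.inl (by positivity))).div_const (α * (t - b))).neg
    convert! this using 1
    rw [Real.div_rpow h1.le h2.le, show -1 - α = -(α - 1) - 2 by ring, Real.rpow_sub h2,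
      Real.rpow_neg h2.le, Real.rpow_two]
    have := (Real.rpow_pos_of_pos h2 (α - 1)).ne'
    field_simp
    ring
  have hint : IntervalIntegrable (fun s => (t - s) ^ (α - 1) * (s - b) ^ (-1 - α)) volume a t := by
    rw [intervalIntegrable_iff_integrableOn_Ioc_of_le hat]
    refine intervalIntegral.integrableOn_deriv_of_nonneg hcont hderiv fun s hs => ?_
    have h1 : 0 < t - s := by linarith [hs.2]
    have h2 : 0 < s - b := by linarith [hs.1]
    positivity
  rw [intervalIntegral.integral_eq_sub_of_hasDerivAt_of_le hat hcont hderiv hint]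
  simp [G, Real.zero_rpow hα0.ne']

theorem integrableOn_mul_sub_rpow {α : ℝ} (hα0 : 0 < α) {u : ℝ → ℝ} (hu : Continuous u)
    (hu_space : Integrable (fun t : ℝ => |u t| / (1 + |t| ^ (1 + α)))) {a b : ℝ} (hab : a < b) :
    IntegrableOn (fun τ => u τ * (b - τ) ^ (-1 - α)) (Iio a) := by
  set R : ℝ := 1 + |b| / (b - a)
  have hba : 0 < b - a := by linarith
  have hR : 0 ≤ R := by positivity
  refine Integrable.mono' (hu_space.integrableOn.const_mul ((b - a) ^ (-1 - α) + R ^ (1 + α)))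
    (Measurable.aestronglyMeasurable (by have := hu.measurable; fun_prop)) ?_
  filter_upwards [ae_restrict_mem measurableSet_Iio] with τ hτ
  have hτ : τ < a := hτ
  have hbτ : 0 < b - τ := by linarith
  have hpow : (b - τ) ^ (-1 - α) = ((b - τ) ^ (1 + α))⁻¹ := by
    rw [← Real.rpow_neg hbτ.le]; congr 1; ring
  have hpow' : (b - a) ^ (-1 - α) = ((b - a) ^ (1 + α))⁻¹ := by
    rw [← Real.rpow_neg hba.le]; congr 1; ring
  have habs : |τ| ≤ R * (b - τ) := by
    have h1 : |τ| ≤ |b| + (b - τ) := by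
      have := abs_sub_le τ b 0
      simp only [sub_zero] at this
      rw [abs_sub_comm, abs_of_pos hbτ] at this
      linarith
    have h2 : |b| ≤ |b| / (b - a) * (b - τ) := by
      rw [div_mul_eq_mul_div, le_div_iff₀ hba]
      exact mul_le_mul_of_nonneg_left (by linarith) (abs_nonneg b)
    simp only [R]
    linarith
  have h1 : 1 ≤ (b - a) ^ (-1 - α) * (b - τ) ^ (1 + α) := by
    rw [hpow', ← div_eq_inv_mul, le_div_iff₀ (by positivity), one_mul]
    exact Real.rpow_le_rpow hba.le (by linarith) (by linarith)
  have h2 : |τ| ^ (1 + α) ≤ R ^ (1 + α) * (b - τ) ^ (1 + α) := by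
    rw [← Real.mul_rpow hR hbτ.le]
    exact Real.rpow_le_rpow (abs_nonneg _) habs (by linarith)
  rw [norm_mul, Real.norm_eq_abs, Real.norm_of_nonneg (by positivity), hpow, ← div_eq_mul_inv,
    mul_div_assoc', div_le_div_iff₀ (by positivity) (by positivity)]
  have := mul_le_mul_of_nonneg_left (add_le_add h1 h2) (abs_nonneg (u τ))
  linarith

theorem integrableOn_and_integral_Iio_sub_rpow {α s δ : ℝ} (hα0 : 0 < α) (hδ : 0 < δ) :
    IntegrableOn (fun τ : ℝ => (s + δ - τ) ^ (-1 - α)) (Iio s) ∧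
      ∫ τ in Iio s, (s + δ - τ) ^ (-1 - α) = δ ^ (-α) / α := by
  have hind : (Iio s).indicator (fun τ : ℝ => (s + δ - τ) ^ (-1 - α)) =
      fun τ => (Ioi δ).indicator (fun x : ℝ => x ^ (-1 - α)) (s + δ - τ) := by
    funext τ
    by_cases h : τ < s
    · rw [indicator_of_mem (show τ ∈ Iio s from h),
        indicator_of_mem (show s + δ - τ ∈ Ioi δ from by rw [mem_Ioi]; linarith)]
    · rw [indicator_of_notMem (show τ ∉ Iio s from h),
        indicator_of_notMem (show s + δ - τ ∉ Ioi δ from by rw [mem_Ioi]; linarith)]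
  have hint := integrableOn_Ioi_rpow_of_lt (show -1 - α < -1 by linarith) hδ
  refine ⟨?_, ?_⟩
  · rw [← integrable_indicator_iff measurableSet_Iio, hind]
    exact ((integrable_indicator_iff measurableSet_Ioi).2 hint).comp_sub_left (s + δ)
  · rw [← integral_indicator measurableSet_Iio, hind,
      integral_sub_left_eq_self ((Ioi δ).indicator fun x : ℝ => x ^ (-1 - α)) volume (s + δ),
      integral_indicator measurableSet_Ioi,
      integral_Ioi_rpow_of_lt (by linarith) hδ, show -1 - α + 1 = -α by ring, neg_div_neg_eq]

theorem integrableOn_Ioc_sub_rpow {α T t : ℝ} (hα0 : 0 < α) (hTt : T ≤ t) :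
    IntegrableOn (fun s : ℝ => (t - s) ^ (α - 1)) (Ioc T t) := by
  have h := (intervalIntegral.intervalIntegrable_rpow' (a := 0) (b := t - T)
    (show -1 < α - 1 by linarith)).comp_sub_left t
  simp only [sub_zero, sub_sub_cancel] at h
  exact (intervalIntegrable_iff_integrableOn_Ioc_of_le hTt).1 h.symm

theorem integrable_abel_kernel_prod {α : ℝ} (hα0 : 0 < α) {u : ℝ → ℝ} (hu : Continuous u)
    (hu_space : Integrable (fun t : ℝ => |u t| / (1 + |t| ^ (1 + α)))) {T t δ : ℝ} (hTt : T < t)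
    (hδ : 0 < δ) :
    Integrable (Function.uncurry fun s τ : ℝ => (t - s) ^ (α - 1) *
        (Iio s).indicator (fun τ => u τ * (s + δ - τ) ^ (-1 - α)) τ)
      ((volume.restrict (Ioc T t)).prod (volume.restrict (Iio t))) := by
  set c : ℝ := 1 + (t - T) / δ
  have hc : 0 < c := by have := sub_pos.2 hTt; positivity
  have hprod := (integrableOn_Ioc_sub_rpow hα0 hTt.le).mul_prod
    ((integrableOn_mul_sub_rpow hα0 hu hu_space (show t < t + δ by linarith)).const_mul
      (c ^ (1 + α)))
  refine hprod.mono (Measurable.aestronglyMeasurable ?_) ?_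
  · have := hu.measurable
    simp only [Function.uncurry_def, indicator_apply, mem_Iio]
    refine Measurable.mul (by fun_prop) (Measurable.ite
      (measurableSet_lt measurable_snd measurable_fst) (by fun_prop) measurable_const)
  · rw [Measure.prod_restrict]
    filter_upwards [ae_restrict_mem (measurableSet_Ioc.prod measurableSet_Iio)] with ⟨s, τ⟩ ⟨hs, hτ⟩
    simp only [Function.uncurry_apply_pair]
    rw [norm_mul, norm_mul]
    refine mul_le_mul_of_nonneg_left ?_ (norm_nonneg _)
    by_cases h : τ < s
    swap
    · rw [indicator_of_notMem (show τ ∉ Iio s from h), norm_zero]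
      positivity
    rw [indicator_of_mem (show τ ∈ Iio s from h), norm_mul, norm_mul, norm_mul, mul_left_comm]
    refine mul_le_mul_of_nonneg_left ?_ (norm_nonneg _)
    have h1 : 0 < s + δ - τ := by linarith
    have h2 : 0 < t + δ - τ := by linarith [hs.2]
    rw [Real.norm_of_nonneg (by positivity), Real.norm_of_nonneg (by positivity),
      Real.norm_of_nonneg (by positivity), show -1 - α = -(1 + α) by ring, Real.rpow_neg h1.le,
      Real.rpow_neg h2.le, ← div_eq_mul_inv, le_div_iff₀ (by positivity), ← div_eq_inv_mul,
      div_le_iff₀ (by positivity), ← Real.mul_rpow hc.le h1.le]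
    refine Real.rpow_le_rpow h2.le ?_ (by linarith)
    have h3 : t - T ≤ (t - T) / δ * (s + δ - τ) := by
      rw [div_mul_eq_mul_div, le_div_iff₀ hδ]
      exact mul_le_mul_of_nonneg_left (by linarith) (by linarith)
    simp only [c]
    linarith [hs.1]

/-- Abel inversion on `(T, t]` of the Marchaud integral with kernel regularized to
`(s + δ - τ) ^ (-1 - α)`: an approximate identity at `t` minus a Poisson-type integral of the past. -/
theorem integral_abel_regularized_marchaud {α : ℝ} (hα0 : 0 < α) {u : ℝ → ℝ}
    (hu : Continuous u) (hu_space : Integrable (fun t : ℝ => |u t| / (1 + |t| ^ (1 + α))))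
    {T t δ : ℝ} (hTt : T < t) (hδ : 0 < δ) :
    α * ∫ s in Ioc T t, (t - s) ^ (α - 1) *
        ∫ τ in Iio s, (u s - u τ) * (s + δ - τ) ^ (-1 - α) =
      (∫ s in Ioc T t, u s * (δ ^ (1 - α) * ((t - s) ^ (α - 1) / (t + δ - s)))) -
        ∫ τ in Iio T, u τ * (((t - T) / (T + δ - τ)) ^ α / (t + δ - τ)) := by
  have hprod := integrable_abel_kernel_prod hα0 hu hu_space hTt hδ
  have hweight : IntegrableOn (fun s => u s * (t - s) ^ (α - 1)) (Ioc T t) :=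
    (((integrableOn_Icc_iff_integrableOn_Ioc enorm_ne_top).2
      (integrableOn_Ioc_sub_rpow hα0 hTt.le)).continuousOn_mul hu.continuousOn
        isCompact_Icc).mono_set Ioc_subset_Icc_self
  have hinner : ∀ s : ℝ, ∫ τ in Iio s, (u s - u τ) * (s + δ - τ) ^ (-1 - α) =
      u s * (δ ^ (-α) / α) - ∫ τ in Iio s, u τ * (s + δ - τ) ^ (-1 - α) := by
    intro s
    have hk := integrableOn_and_integral_Iio_sub_rpow (s := s) hα0 hδ
    simp only [sub_mul]
    rw [integral_sub (hk.1.const_mul _) (integrableOn_mul_sub_rpow hα0 hu hu_space (by linarith)),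
      integral_const_mul, hk.2]
  have hV : ∀ s ∈ Ioc T t, ∫ τ in Iio t, (t - s) ^ (α - 1) *
        (Iio s).indicator (fun τ => u τ * (s + δ - τ) ^ (-1 - α)) τ =
      (t - s) ^ (α - 1) * ∫ τ in Iio s, u τ * (s + δ - τ) ^ (-1 - α) := by
    intro s hs
    rw [integral_const_mul, setIntegral_indicator measurableSet_Iio,
      inter_eq_self_of_subset_right (Iio_subset_Iio hs.2)]
  have hJ : ∀ τ ∈ Iio t, ∫ s in Ioc T t, (t - s) ^ (α - 1) *
        (Iio s).indicator (fun τ => u τ * (s + δ - τ) ^ (-1 - α)) τ =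
      u τ * (((t - max T τ) / (max T τ + δ - τ)) ^ α / (α * (t + δ - τ))) := by
    intro τ hτ
    have hm : max T τ ≤ t := max_le hTt.le (le_of_lt hτ)
    have hm' : τ - δ < max T τ := by linarith [le_max_right T τ]
    have hk := integral_sub_rpow_mul_sub_rpow (α := α) hα0 hm' hm
    rw [intervalIntegral.integral_of_le hm] at hk
    have : (fun s => (t - s) ^ (α - 1) *
        (Iio s).indicator (fun τ => u τ * (s + δ - τ) ^ (-1 - α)) τ) =
        (Ioi τ).indicator fun s => u τ * ((t - s) ^ (α - 1) * (s - (τ - δ)) ^ (-1 - α)) := by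
      funext s
      by_cases h : τ < s
      · rw [indicator_of_mem (show τ ∈ Iio s from h), indicator_of_mem (show s ∈ Ioi τ from h),
          show s - (τ - δ) = s + δ - τ by ring]
        ring
      · rw [indicator_of_notMem (show τ ∉ Iio s from h),
          indicator_of_notMem (show s ∉ Ioi τ from h), mul_zero]
    rw [this, setIntegral_indicator measurableSet_Ioi, Ioc_inter_Ioi, integral_const_mul, hk,
      show max T τ - (τ - δ) = max T τ + δ - τ by ring, show t - (τ - δ) = t + δ - τ by ring]
  have hVint : IntegrableOn (fun s => (t - s) ^ (α - 1) *
      ∫ τ in Iio s, u τ * (s + δ - τ) ^ (-1 - α)) (Ioc T t) := by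
    refine hprod.integral_prod_left.congr ?_
    filter_upwards [ae_restrict_mem measurableSet_Ioc] with s hs using hV s hs
  have hJint : IntegrableOn
      (fun τ => u τ * (((t - max T τ) / (max T τ + δ - τ)) ^ α / (α * (t + δ - τ)))) (Iio t) := by
    refine hprod.integral_prod_right.congr ?_
    filter_upwards [ae_restrict_mem measurableSet_Iio] with τ hτ using hJ τ hτ
  have hswap := integral_integral_swap hprod
  rw [setIntegral_congr_fun measurableSet_Ioc hV, setIntegral_congr_fun measurableSet_Iio hJ]
    at hswap
  have hsplit : ∫ τ in Iio t,
        u τ * (((t - max T τ) / (max T τ + δ - τ)) ^ α / (α * (t + δ - τ))) =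
      (∫ τ in Iio T, u τ * (((t - T) / (T + δ - τ)) ^ α / (t + δ - τ))) / α +
        ∫ τ in Ioc T t, u τ * (((t - τ) / δ) ^ α / (α * (t + δ - τ))) := by
    rw [← Iio_union_Ico_eq_Iio hTt.le, setIntegral_union
      ((Iio_disjoint_Ici le_rfl).mono_right Ico_subset_Ici_self) measurableSet_Ico
      (hJint.mono_set (Iio_subset_Iio hTt.le)) (hJint.mono_set Ico_subset_Iio_self),
      integral_Ico_eq_integral_Ioo, ← integral_Ioc_eq_integral_Ioo]
    congr 1
    · rw [← integral_div]
      refine setIntegral_congr_fun measurableSet_Iio fun τ hτ => ?_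
      simp only [max_eq_left (mem_Iio.1 hτ).le]
      field_simp
    · refine setIntegral_congr_fun measurableSet_Ioc fun τ hτ => ?_
      simp only [max_eq_right hτ.1.le, add_sub_cancel_left]
  have hJint' : IntegrableOn (fun τ => u τ * (((t - τ) / δ) ^ α / (α * (t + δ - τ))))
      (Ioc T t) := by
    refine ((integrableOn_Ioc_iff_integrableOn_Ioo enorm_ne_top).2
      (hJint.mono_set Ioo_subset_Iio_self)).congr_fun ?_ measurableSet_Ioc
    intro τ hτ
    simp only [max_eq_right hτ.1.le, add_sub_cancel_left]
  simp only [hinner, mul_sub]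
  have hleft : ∀ s, (t - s) ^ (α - 1) * (u s * (δ ^ (-α) / α)) =
      u s * (t - s) ^ (α - 1) * (δ ^ (-α) / α) := fun s => by ring
  simp only [hleft]
  rw [integral_sub (hweight.mul_const _) hVint, hswap, hsplit, sub_add_eq_sub_sub, sub_right_comm,
    ← integral_sub (hweight.mul_const _) hJint', mul_sub, mul_div_cancel₀ _ hα0.ne',
    ← integral_const_mul]
  congr 1
  rw [integral_Ioc_eq_integral_Ioo, integral_Ioc_eq_integral_Ioo]
  refine setIntegral_congr_fun measurableSet_Ioo fun s hs => ?_
  have h1 : 0 < t - s := sub_pos.2 hs.2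
  have h2 : 0 < t + δ - s := by linarith
  rw [Real.div_rpow h1.le hδ.le, Real.rpow_neg hδ.le, Real.rpow_sub hδ, Real.rpow_one,
    Real.rpow_sub_one h1.ne']
  field_simp
  ring

theorem tendsto_integral_regularized_kernel {α : ℝ} (hα0 : 0 < α) (hα1 : α < 1) {u : ℝ → ℝ}
    (hu : Continuous u) {T t : ℝ} (hTt : T < t) :
    Tendsto (fun δ : ℝ => ∫ s in Ioc T t, u s * (δ ^ (1 - α) * ((t - s) ^ (α - 1) / (t + δ - s))))
      (𝓝[>] 0) (𝓝 (u t * (Real.Gamma α * Real.Gamma (1 - α)))) := by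
  obtain ⟨hint, hval⟩ := integrable_and_integral_rpow_sub_one_div_one_add hα0 hα1
  have hrescale : ∀ δ : ℝ, 0 < δ →
      ∫ q in Ioi (0 : ℝ), (Ioi T).indicator u (t - δ * q) * (q ^ (α - 1) / (1 + q)) =
      ∫ s in Ioc T t, u s * (δ ^ (1 - α) * ((t - s) ^ (α - 1) / (t + δ - s))) := by
    intro δ hδ
    set g : ℝ → ℝ := (Ioo T t).indicator fun s =>
      u s * (δ ^ (1 - α) * ((t - s) ^ (α - 1) / (t + δ - s))) with hg
    have hgq : (Ioi (0 : ℝ)).indicator (fun q => (Ioi T).indicator u (t - δ * q) *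
        (q ^ (α - 1) / (1 + q))) = fun q => δ * g (t - δ * q) := by
      funext q
      by_cases hq : 0 < q
      · have hδq : 0 < δ * q := by positivity
        rw [indicator_of_mem (show q ∈ Ioi (0 : ℝ) from hq)]
        by_cases hT : T < t - δ * q
        · rw [indicator_of_mem (show t - δ * q ∈ Ioi T from hT), hg,
            indicator_of_mem (show t - δ * q ∈ Ioo T t from ⟨hT, by linarith⟩),
            show t - (t - δ * q) = δ * q by ring, show t + δ - (t - δ * q) = δ * (1 + q) by ring,
            Real.mul_rpow hδ.le hq.le, show 1 - α = -(α - 1) by ring, Real.rpow_neg hδ.le]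
          have := (Real.rpow_pos_of_pos hδ (α - 1)).ne'
          field_simp
        · rw [indicator_of_notMem (show t - δ * q ∉ Ioi T from hT), hg,
            indicator_of_notMem (show t - δ * q ∉ Ioo T t from fun h => hT h.1), zero_mul, mul_zero]
      · have hδq : δ * q ≤ 0 := mul_nonpos_of_nonneg_of_nonpos hδ.le (not_lt.1 hq)
        rw [indicator_of_notMem (show q ∉ Ioi (0 : ℝ) from hq), hg,
          indicator_of_notMem (show t - δ * q ∉ Ioo T t from fun h => by linarith [h.2]), mul_zero]
    rw [← integral_indicator measurableSet_Ioi, hgq, integral_const_mul,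
      Measure.integral_comp_mul_left (fun x => g (t - x)) δ, integral_sub_left_eq_self g volume t,
      integral_indicator measurableSet_Ioo, ← integral_Ioc_eq_integral_Ioo, smul_eq_mul,
      abs_of_pos (inv_pos.2 hδ), mul_inv_cancel_left₀ hδ.ne']
  obtain ⟨M, hM⟩ := isCompact_Icc.exists_bound_of_continuousOn (hu.continuousOn (s := Icc T t))
  have hM0 : 0 ≤ M := (norm_nonneg _).trans (hM t ⟨hTt.le, le_rfl⟩)
  rw [← hval, ← integral_const_mul]
  refine Tendsto.congr' (f₁ := fun δ : ℝ => ∫ q in Ioi (0 : ℝ),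
    (Ioi T).indicator u (t - δ * q) * (q ^ (α - 1) / (1 + q))) ?_ ?_
  · filter_upwards [self_mem_nhdsWithin] with δ hδ using hrescale δ hδ
  refine tendsto_integral_filter_of_dominated_convergence
    (fun q => M * (q ^ (α - 1) / (1 + q))) ?_ ?_ (hint.const_mul M) ?_
  · refine Eventually.of_forall fun δ => Measurable.aestronglyMeasurable ?_
    have h1 : Measurable ((Ioi T).indicator u) := hu.measurable.indicator measurableSet_Ioi
    fun_prop
  · filter_upwards [self_mem_nhdsWithin] with δ hδ
    have hδ : 0 < δ := hδ
    filter_upwards [ae_restrict_mem measurableSet_Ioi] with q hq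
    have hq : 0 < q := hq
    have hδq : 0 < δ * q := by positivity
    rw [norm_mul, Real.norm_of_nonneg (show 0 ≤ q ^ (α - 1) / (1 + q) by positivity)]
    refine mul_le_mul_of_nonneg_right ?_ (by positivity)
    by_cases hT : T < t - δ * q
    · rw [indicator_of_mem (show t - δ * q ∈ Ioi T from hT)]
      exact hM _ ⟨hT.le, by linarith⟩
    · rwa [indicator_of_notMem (show t - δ * q ∉ Ioi T from hT), norm_zero]
  · refine Eventually.of_forall fun q => Tendsto.mul_const _ ?_
    have hshift : Tendsto (fun δ : ℝ => t - δ * q) (𝓝[>] 0) (𝓝 t) := by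
      have : Tendsto (fun δ : ℝ => t - δ * q) (𝓝 0) (𝓝 (t - 0 * q)) :=
        Continuous.tendsto (by fun_prop) 0
      rw [zero_mul, sub_zero] at this
      exact this.mono_left nhdsWithin_le_nhds
    refine Tendsto.congr' ?_ ((hu.tendsto t).comp hshift)
    filter_upwards [hshift.eventually (Ioi_mem_nhds hTt)] with δ hδ
    exact (indicator_of_mem (show t - δ * q ∈ Ioi T from hδ) u).symm

theorem exists_bound_integral_marchaud {α : ℝ} (hα0 : 0 < α) {u : ℝ → ℝ} (hu : Continuous u)
    (hu_nonneg : ∀ t, 0 ≤ u t)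
    (hu_space : Integrable (fun t : ℝ => |u t| / (1 + |t| ^ (1 + α)))) {ε : ℝ} (hε : 0 < ε)
    (hu_holder : ∀ a b : ℝ, ∃ K : ℝ,
      ∀ t ∈ Icc a b, ∀ s ∈ Icc a b, |u t - u s| ≤ K * |t - s| ^ (α + ε))
    (hint : ∀ t : ℝ, IntegrableOn (fun τ : ℝ => (u t - u τ) / (t - τ) ^ (1 + α)) (Iio t))
    (T t : ℝ) :
    ∃ M : ℝ, ∀ s ∈ Ioc T t, ∫ τ in Iio s, ‖(u s - u τ) / (s - τ) ^ (1 + α)‖ ≤ M := by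
  obtain ⟨A, hA⟩ := isCompact_Icc.exists_bound_of_continuousOn (hu.continuousOn (s := Icc T t))
  obtain ⟨K, hK⟩ := hu_holder (T - 1) t
  have hfar : IntegrableOn (fun τ => A * (T - τ) ^ (-1 - α) + u τ * (T - τ) ^ (-1 - α))
      (Iio (T - 1)) := by
    refine Integrable.add (Integrable.const_mul ?_ A)
      (integrableOn_mul_sub_rpow hα0 hu hu_space (by linarith))
    have := (integrableOn_and_integral_Iio_sub_rpow (s := T - 1) hα0 one_pos).1
    simp only [sub_add_cancel] at this
    exact this
  refine ⟨(∫ τ in Iio (T - 1), (A * (T - τ) ^ (-1 - α) + u τ * (T - τ) ^ (-1 - α))) +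
    |K| * ((t - (T - 1)) ^ ε / ε), fun s hs => ?_⟩
  have hTs : T - 1 ≤ s := by linarith [hs.1]
  have hn : IntegrableOn (fun τ => ‖(u s - u τ) / (s - τ) ^ (1 + α)‖) (Iio s) := (hint s).norm
  rw [← Iio_union_Ico_eq_Iio hTs, setIntegral_union
    ((Iio_disjoint_Ici le_rfl).mono_right Ico_subset_Ici_self) measurableSet_Ico
    (hn.mono_set (Iio_subset_Iio hTs)) (hn.mono_set Ico_subset_Iio_self)]
  refine add_le_add ?_ ?_
  · refine setIntegral_mono_on (hn.mono_set (Iio_subset_Iio hTs)) hfar measurableSet_Iio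
      fun τ hτ => ?_
    have hτ : τ < T - 1 := hτ
    have h1 : 0 < T - τ := by linarith
    have h2 : 0 < s - τ := by linarith
    have hAs := hA s ⟨hs.1.le, hs.2⟩
    have hnum : |u s - u τ| ≤ A + u τ := by
      rw [Real.norm_eq_abs] at hAs
      have h3 := abs_sub (u s) (u τ)
      rw [abs_of_nonneg (hu_nonneg τ)] at h3
      linarith
    rw [norm_div, Real.norm_eq_abs, Real.norm_of_nonneg (by positivity), ← add_mul,
      show -1 - α = -(1 + α) by ring, Real.rpow_neg h1.le, ← div_eq_mul_inv]
    refine div_le_div₀ ((abs_nonneg _).trans hnum) hnum (by positivity) ?_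
    exact Real.rpow_le_rpow h1.le (by linarith [hs.1]) (by linarith)
  · have hker : ∫ τ in Ioc (T - 1) s, (s - τ) ^ (ε - 1) = (s - (T - 1)) ^ ε / ε := by
      rw [← intervalIntegral.integral_of_le hTs,
        intervalIntegral.integral_comp_sub_left (fun x => x ^ (ε - 1)) s,
        integral_rpow (Or.inl (by linarith))]
      simp [Real.zero_rpow hε.ne']
    calc ∫ τ in Ico (T - 1) s, ‖(u s - u τ) / (s - τ) ^ (1 + α)‖
        ≤ ∫ τ in Ico (T - 1) s, |K| * (s - τ) ^ (ε - 1) := by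
          refine setIntegral_mono_on (hn.mono_set Ico_subset_Iio_self) ?_ measurableSet_Ico
            fun τ hτ => ?_
          · refine (integrableOn_Ico_iff_integrableOn_Ioo enorm_ne_top).2
              (IntegrableOn.mono_set ?_ Ioo_subset_Ioc_self)
            exact (integrableOn_Ioc_sub_rpow hε hTs).const_mul _
          · have h2 : 0 < s - τ := sub_pos.2 hτ.2
            have h3 := hK s ⟨hTs, hs.2⟩ τ ⟨hτ.1, hτ.2.le.trans hs.2⟩
            rw [norm_div, Real.norm_eq_abs, Real.norm_of_nonneg (by positivity),
              div_le_iff₀ (by positivity), mul_assoc, ← Real.rpow_add h2,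
              show ε - 1 + (1 + α) = α + ε by ring]
            rw [abs_of_pos h2] at h3
            exact h3.trans (mul_le_mul_of_nonneg_right (le_abs_self K) (by positivity))
      _ = |K| * ((s - (T - 1)) ^ ε / ε) := by
          rw [integral_const_mul, integral_Ico_eq_integral_Ioo, ← integral_Ioc_eq_integral_Ioo, hker]
      _ ≤ |K| * ((t - (T - 1)) ^ ε / ε) := by
          have := hs.2
          have h0 : 0 ≤ s - (T - 1) := by linarith
          gcongr

theorem tendsto_integral_regularized_marchaud {α : ℝ} (hα0 : 0 < α) {u : ℝ → ℝ}
    (hu : Continuous u)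
    (hint : ∀ t : ℝ, IntegrableOn (fun τ : ℝ => (u t - u τ) / (t - τ) ^ (1 + α)) (Iio t))
    {T t M : ℝ} (hTt : T < t)
    (hM : ∀ s ∈ Ioc T t, ∫ τ in Iio s, ‖(u s - u τ) / (s - τ) ^ (1 + α)‖ ≤ M) :
    Tendsto (fun δ : ℝ => ∫ s in Ioc T t, (t - s) ^ (α - 1) *
        ∫ τ in Iio s, (u s - u τ) * (s + δ - τ) ^ (-1 - α)) (𝓝[>] 0)
      (𝓝 (∫ s in Ioc T t, (t - s) ^ (α - 1) *
        ∫ τ in Iio s, (u s - u τ) / (s - τ) ^ (1 + α))) := by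
  have hdom : ∀ δ : ℝ, 0 < δ → ∀ s τ : ℝ, τ < s →
      ‖(u s - u τ) * (s + δ - τ) ^ (-1 - α)‖ ≤ ‖(u s - u τ) / (s - τ) ^ (1 + α)‖ := by
    intro δ hδ s τ hτ
    have h1 : 0 < s - τ := sub_pos.2 hτ
    have h2 : 0 < s + δ - τ := by linarith
    rw [div_eq_mul_inv, norm_mul, norm_mul, ← Real.rpow_neg h1.le, neg_add',
      Real.norm_of_nonneg (show 0 ≤ (s + δ - τ) ^ (-1 - α) by positivity),
      Real.norm_of_nonneg (show 0 ≤ (s - τ) ^ (-1 - α) by positivity)]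
    exact mul_le_mul_of_nonneg_left
      (Real.rpow_le_rpow_of_nonpos h1 (by linarith) (by linarith)) (norm_nonneg _)
  refine tendsto_integral_filter_of_dominated_convergence (fun s => (t - s) ^ (α - 1) * M) ?_ ?_
    ((integrableOn_Ioc_sub_rpow hα0 hTt.le).mul_const M) ?_
  · refine Eventually.of_forall fun δ => AEStronglyMeasurable.mul
      (Measurable.aestronglyMeasurable (by fun_prop)) ?_
    have hmeas : Measurable (Function.uncurry fun s τ : ℝ =>
        (Iio s).indicator (fun τ => (u s - u τ) * (s + δ - τ) ^ (-1 - α)) τ) := by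
      have := hu.measurable
      simp only [Function.uncurry_def, indicator_apply, mem_Iio]
      exact Measurable.ite (measurableSet_lt measurable_snd measurable_fst) (by fun_prop)
        measurable_const
    have := hmeas.stronglyMeasurable.integral_prod_right (ν := volume)
    simp only [integral_indicator measurableSet_Iio] at this
    exact this.aestronglyMeasurable
  · filter_upwards [self_mem_nhdsWithin] with δ hδ
    filter_upwards [ae_restrict_mem measurableSet_Ioc] with s hs
    have h0 : 0 ≤ t - s := sub_nonneg.2 hs.2
    rw [norm_mul, Real.norm_of_nonneg (by positivity)]
    refine mul_le_mul_of_nonneg_left (le_trans ?_ (hM s hs)) (by positivity)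
    refine norm_integral_le_of_norm_le (hint s).norm ?_
    filter_upwards [ae_restrict_mem measurableSet_Iio] with τ hτ using hdom δ hδ s τ hτ
  · refine Eventually.of_forall fun s => Tendsto.const_mul _ ?_
    refine tendsto_integral_filter_of_dominated_convergence
      (fun τ => ‖(u s - u τ) / (s - τ) ^ (1 + α)‖) ?_ ?_ (hint s).norm ?_
    · refine Eventually.of_forall fun δ => Measurable.aestronglyMeasurable ?_
      have := hu.measurable
      fun_prop
    · filter_upwards [self_mem_nhdsWithin] with δ hδ
      filter_upwards [ae_restrict_mem measurableSet_Iio] with τ hτ using hdom δ hδ s τ hτ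
    · filter_upwards [ae_restrict_mem measurableSet_Iio] with τ hτ
      have h1 : 0 < s - τ := sub_pos.2 hτ
      rw [div_eq_mul_inv, ← Real.rpow_neg h1.le, neg_add']
      refine Tendsto.const_mul _ (Tendsto.rpow_const ?_ (Or.inl h1.ne'))
      have : Tendsto (fun δ : ℝ => s + δ - τ) (𝓝 0) (𝓝 (s + 0 - τ)) :=
        Continuous.tendsto (by fun_prop) 0
      rw [add_zero] at this
      exact this.mono_left nhdsWithin_le_nhds

/-- Harnack-type comparison of the Poisson-type integrals at two times. -/
theorem integral_poisson_kernel_le {α : ℝ} (hα0 : 0 < α) {u : ℝ → ℝ} (hu : Continuous u)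
    (hu_nonneg : ∀ t, 0 ≤ u t)
    (hu_space : Integrable (fun t : ℝ => |u t| / (1 + |t| ^ (1 + α)))) {T t t' δ : ℝ}
    (hTt : T < t) (htt' : t ≤ t') (hδ : 0 < δ) :
    ((t - T) / (t' - T)) ^ α *
          (∫ τ in Iio T, u τ * (((t' - T) / (T + δ - τ)) ^ α / (t' + δ - τ))) ≤
        ∫ τ in Iio T, u τ * (((t - T) / (T + δ - τ)) ^ α / (t + δ - τ)) ∧
      ∫ τ in Iio T, u τ * (((t - T) / (T + δ - τ)) ^ α / (t + δ - τ)) ≤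
        ((t - T) / (t' - T)) ^ (α - 1) *
          ∫ τ in Iio T, u τ * (((t' - T) / (T + δ - τ)) ^ α / (t' + δ - τ)) := by
  have hint : ∀ r, T < r →
      IntegrableOn (fun τ => u τ * (((r - T) / (T + δ - τ)) ^ α / (r + δ - τ))) (Iio T) := by
    intro r hr
    have hr0 : 0 < r - T := sub_pos.2 hr
    refine Integrable.mono' ((integrableOn_mul_sub_rpow hα0 hu hu_space
      (show T < T + δ by linarith)).const_mul ((r - T) ^ α))
      (Measurable.aestronglyMeasurable (by have := hu.measurable; fun_prop)) ?_
    filter_upwards [ae_restrict_mem measurableSet_Iio] with τ hτ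
    have hτ : τ < T := hτ
    have h1 : 0 < T + δ - τ := by linarith
    have h2 : 0 < r + δ - τ := by linarith
    have := hu_nonneg τ
    rw [Real.norm_of_nonneg (by positivity), mul_left_comm]
    refine mul_le_mul_of_nonneg_left ?_ this
    rw [Real.div_rpow hr0.le h1.le, div_div, div_eq_mul_inv]
    refine mul_le_mul_of_nonneg_left ?_ (by positivity)
    rw [show -1 - α = -(α + 1) by ring, Real.rpow_neg h1.le, Real.rpow_add_one h1.ne']
    gcongr
  have hx : 0 < t - T := sub_pos.2 hTt
  have hx' : 0 < t' - T := by linarith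
  rw [← integral_const_mul, ← integral_const_mul]
  refine ⟨setIntegral_mono_on ((hint t' (by linarith)).const_mul _) (hint t hTt) measurableSet_Iio
    fun τ hτ => ?_, setIntegral_mono_on (hint t hTt) ((hint t' (by linarith)).const_mul _)
    measurableSet_Iio fun τ hτ => ?_⟩
  all_goals
    have hτ : τ < T := hτ
    have h1 : 0 < T + δ - τ := by linarith
    have h2 : 0 < t + δ - τ := by linarith
    have h3 : 0 < t' + δ - τ := by linarith
    rw [mul_left_comm]
    refine mul_le_mul_of_nonneg_left ?_ (hu_nonneg τ)
    rw [Real.div_rpow hx.le h1.le, Real.div_rpow hx'.le h1.le]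
  · rw [Real.div_rpow hx.le hx'.le]
    have h4 := (Real.rpow_pos_of_pos hx' α).ne'
    rw [show (t - T) ^ α / (t' - T) ^ α * ((t' - T) ^ α / (T + δ - τ) ^ α / (t' + δ - τ)) =
      (t - T) ^ α / (T + δ - τ) ^ α / (t' + δ - τ) by field_simp]
    gcongr
  · rw [Real.rpow_sub_one (by positivity), Real.div_rpow hx.le hx'.le]
    have h4 := (Real.rpow_pos_of_pos hx' α).ne'
    rw [show (t - T) ^ α / (t' - T) ^ α / ((t - T) / (t' - T)) *
        ((t' - T) ^ α / (T + δ - τ) ^ α / (t' + δ - τ)) =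
      (t - T) ^ α / (T + δ - τ) ^ α * ((t' - T) / ((t - T) * (t' + δ - τ))) by field_simp,
      div_eq_mul_inv]
    refine mul_le_mul_of_nonneg_left ?_ (by positivity)
    rw [← one_div, div_le_div_iff₀ h2 (by positivity)]
    nlinarith

/-- Representation of `u t` on `(T, t]` by its Marchaud derivative there and its values before `T`. -/
theorem tendsto_integral_poisson_kernel {α : ℝ} (hα0 : 0 < α) (hα1 : α < 1) {u : ℝ → ℝ}
    (hu : Continuous u) (hu_nonneg : ∀ t, 0 ≤ u t)
    (hu_space : Integrable (fun t : ℝ => |u t| / (1 + |t| ^ (1 + α)))) {ε : ℝ} (hε : 0 < ε)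
    (hu_holder : ∀ a b : ℝ, ∃ K : ℝ,
      ∀ t ∈ Icc a b, ∀ s ∈ Icc a b, |u t - u s| ≤ K * |t - s| ^ (α + ε))
    (hint : ∀ t : ℝ, IntegrableOn (fun τ : ℝ => (u t - u τ) / (t - τ) ^ (1 + α)) (Iio t))
    {T t : ℝ} (hTt : T < t) :
    Tendsto (fun δ : ℝ => ∫ τ in Iio T, u τ * (((t - T) / (T + δ - τ)) ^ α / (t + δ - τ)))
      (𝓝[>] 0) (𝓝 (u t * (Real.Gamma α * Real.Gamma (1 - α)) - α * ∫ s in Ioc T t,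
        (t - s) ^ (α - 1) * ∫ τ in Iio s, (u s - u τ) / (s - τ) ^ (1 + α))) := by
  obtain ⟨M, hM⟩ :=
    exists_bound_integral_marchaud hα0 hu hu_nonneg hu_space hε hu_holder hint T t
  refine Tendsto.congr' ?_ ((tendsto_integral_regularized_kernel hα0 hα1 hu hTt).sub
    ((tendsto_integral_regularized_marchaud hα0 hu hint hTt hM).const_mul α))
  filter_upwards [self_mem_nhdsWithin] with δ hδ
  rw [integral_abel_regularized_marchaud hα0 hu hu_space hTt hδ, sub_sub_cancel]

theorem continuous_of_locally_holder {u : ℝ → ℝ} {β : ℝ} (hβ : 0 < β)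
    (hu : ∀ a b : ℝ, ∃ K : ℝ, ∀ t ∈ Icc a b, ∀ s ∈ Icc a b, |u t - u s| ≤ K * |t - s| ^ β) :
    Continuous u := by
  rw [continuous_iff_continuousAt]
  intro t
  obtain ⟨K, hK⟩ := hu (t - 1) (t + 1)
  rw [ContinuousAt, tendsto_iff_dist_tendsto_zero]
  have hlim : Tendsto (fun s => K * |s - t| ^ β) (𝓝 t) (𝓝 0) := by
    have : Tendsto (fun s => K * |s - t| ^ β) (𝓝 t) (𝓝 (K * |t - t| ^ β)) :=
      Continuous.tendsto (by fun_prop (disch := exact hβ.le)) t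
    simpa [Real.zero_rpow hβ.ne'] using this
  refine squeeze_zero' (Eventually.of_forall fun _ => dist_nonneg) ?_ hlim
  filter_upwards [Icc_mem_nhds (show t - 1 < t by linarith) (show t < t + 1 by linarith)] with s hs
  exact hK s hs t ⟨by linarith, by linarith⟩

theorem tendsto_sub_div_sub_atBot (t t' : ℝ) :
    Tendsto (fun T : ℝ => (t - T) / (t' - T)) atBot (𝓝 1) := by
  have hinv : Tendsto (fun T : ℝ => (t - t') * (t' - T)⁻¹) atBot (𝓝 ((t - t') * 0)) :=
    ((tendsto_inv_atTop_zero.comp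
      (tendsto_atTop_add_const_left _ t' tendsto_neg_atBot_atTop)).congr fun T => by
        simp [sub_eq_add_neg]).const_mul _
  have := hinv.const_add 1
  rw [mul_zero, add_zero] at this
  refine this.congr' ?_
  filter_upwards [eventually_lt_atBot t'] with T hT
  have : t' - T ≠ 0 := (sub_pos.2 hT).ne'
  field_simp
  ring

theorem abs_Gamma_neg {α : ℝ} (hα0 : 0 < α) (hα1 : α < 1) :
    |Real.Gamma (-α)| = Real.Gamma (1 - α) / α := by
  have h := Real.Gamma_add_one (s := -α) (by linarith)
  have hpos := Real.Gamma_pos_of_pos (s := 1 - α) (by linarith)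
  rw [show -α + 1 = 1 - α by ring] at h
  rw [eq_div_iff hα0.ne', h, abs_of_neg (by nlinarith)]
  ring

theorem integrableOn_Iic_and_tendsto_of_integral_Ioc_le {g : ℝ → ℝ} {t C : ℝ}
    (hg : ∀ s ≤ t, 0 ≤ g s)
    (hint : ∀ T, IntegrableOn g (Ioc T t))
    (hC : ∀ T < t, ∫ s in Ioc T t, g s ≤ C) :
    IntegrableOn g (Iic t) ∧
      Tendsto (fun T => ∫ s in Ioc T t, g s) atBot (𝓝 (∫ s in Iic t, g s)) := by
  have hi : IntegrableOn g (Iic t) := by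
    refine integrableOn_Iic_of_intervalIntegral_norm_bounded C t (a := id) hint tendsto_id ?_
    filter_upwards [eventually_lt_atBot t] with T hT
    rw [id, intervalIntegral.integral_of_le hT.le, setIntegral_congr_fun measurableSet_Ioc
      fun s hs => Real.norm_of_nonneg (hg s hs.2)]
    exact hC T hT
  refine ⟨hi, (intervalIntegral_tendsto_integral_Iic t hi tendsto_id).congr' ?_⟩
  filter_upwards [eventually_lt_atBot t] with T hT
  exact intervalIntegral.integral_of_le hT.le

/-- integral representation of solutions of `∂_t^α u = f` on `ℝ`. If `u ≥ 0`
is in `𝓛_α(ℝ)`, locally Hölder of order `α + ε`, `f ≥ 0` is measurable and locally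
bounded, and `C_α ∫_{-∞}^t (u(t)-u(τ))/(t-τ)^{1+α} dτ = f(t)` for all `t` (the integral
converging absolutely), then there is `c₀ ≥ 0` with
`u(t) = c₀ + (1/Γ(α)) ∫_{-∞}^t f(τ)(t-τ)^{α-1} dτ` for all `t`. -/
theorem integral_representation_marchaud
    (α : ℝ) (hα0 : 0 < α) (hα1 : α < 1)
    (u f : ℝ → ℝ)
    (hu_nonneg : ∀ t, 0 ≤ u t)
    (hu_loc : LocallyIntegrable u)
    (hu_space : Integrable (fun t : ℝ => |u t| / (1 + |t| ^ (1 + α))))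
    (hu_holder : ∃ ε > (0 : ℝ), α + ε ≤ 1 ∧ ∀ a b : ℝ, ∃ K : ℝ,
      ∀ t ∈ Icc a b, ∀ s ∈ Icc a b, |u t - u s| ≤ K * |t - s| ^ (α + ε))
    (hf_nonneg : ∀ t, 0 ≤ f t)
    (hf_meas : Measurable f)
    (hf_locbdd : ∀ a b : ℝ, ∃ K : ℝ, ∀ t ∈ Icc a b, |f t| ≤ K)
    (heq : ∀ t : ℝ,
      IntegrableOn (fun τ : ℝ => (u t - u τ) / (t - τ) ^ (1 + α)) (Iio t) ∧
      (1 / |Real.Gamma (-α)|) * ∫ τ in Iio t, (u t - u τ) / (t - τ) ^ (1 + α) = f t) :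
    ∃ c₀ : ℝ, 0 ≤ c₀ ∧ ∀ t : ℝ,
      IntegrableOn (fun τ : ℝ => f τ * (t - τ) ^ (α - 1)) (Iio t) ∧
      u t = c₀ + (1 / Real.Gamma α) * ∫ τ in Iio t, f τ * (t - τ) ^ (α - 1) := by
  obtain ⟨ε, hε, -, hu_holder⟩ := hu_holder
  have hu : Continuous u := continuous_of_locally_holder (by linarith) hu_holder
  have hG : 0 < Real.Gamma α := Real.Gamma_pos_of_pos hα0
  have hG' : 0 < Real.Gamma (1 - α) := Real.Gamma_pos_of_pos (by linarith)
  set g : ℝ → ℝ → ℝ := fun t τ => f τ * (t - τ) ^ (α - 1) with hg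
  set E : ℝ → ℝ → ℝ := fun t T => Real.Gamma α * u t - ∫ s in Ioc T t, g t s with hE
  have hderiv : ∀ s, ∫ τ in Iio s, (u s - u τ) / (s - τ) ^ (1 + α) =
      Real.Gamma (1 - α) / α * f s := by
    intro s
    rw [← (heq s).2, abs_Gamma_neg hα0 hα1]
    field_simp
  have hlim : ∀ T t, T < t → Tendsto
      (fun δ : ℝ => ∫ τ in Iio T, u τ * (((t - T) / (T + δ - τ)) ^ α / (t + δ - τ)))
      (𝓝[>] 0) (𝓝 (Real.Gamma (1 - α) * E t T)) := by
    intro T t hTt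
    have := tendsto_integral_poisson_kernel hα0 hα1 hu hu_nonneg hu_space hε hu_holder
      (fun t => (heq t).1) hTt
    simp only [hderiv] at this
    convert this using 2
    rw [hE, mul_sub, ← integral_const_mul, ← integral_const_mul]
    congr 1
    · ring
    · refine integral_congr_ae (Eventually.of_forall fun s => ?_)
      simp only [hg]
      field_simp
  have hE_nonneg : ∀ T t, T < t → 0 ≤ E t T := by
    intro T t hTt
    refine nonneg_of_mul_nonneg_right (ge_of_tendsto (hlim T t hTt) ?_) hG'
    filter_upwards [self_mem_nhdsWithin] with δ hδ
    have hδ : 0 < δ := hδ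
    refine setIntegral_nonneg measurableSet_Iio fun τ hτ => mul_nonneg (hu_nonneg τ) ?_
    have hτ : τ < T := hτ
    have h1 : 0 < T + δ - τ := by linarith
    have h2 : 0 < t + δ - τ := by linarith
    have h3 : 0 < t - T := by linarith
    positivity
  have hharnack : ∀ T t t', T < t → t ≤ t' → ((t - T) / (t' - T)) ^ α * E t' T ≤ E t T ∧
      E t T ≤ ((t - T) / (t' - T)) ^ (α - 1) * E t' T := by
    intro T t t' hTt htt'
    have h1 := hlim T t hTt
    have h2 := hlim T t' (hTt.trans_le htt')
    have hle := fun δ (hδ : δ ∈ Ioi (0 : ℝ)) =>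
      integral_poisson_kernel_le hα0 hu hu_nonneg hu_space hTt htt' hδ
    have hlow := le_of_tendsto_of_tendsto (h2.const_mul _) h1
      (eventually_of_mem self_mem_nhdsWithin fun δ hδ => (hle δ hδ).1)
    have hupp := le_of_tendsto_of_tendsto h1 (h2.const_mul _)
      (eventually_of_mem self_mem_nhdsWithin fun δ hδ => (hle δ hδ).2)
    rw [mul_left_comm] at hlow hupp
    exact ⟨le_of_mul_le_mul_left hlow hG', le_of_mul_le_mul_left hupp hG'⟩
  have hg_nonneg : ∀ t, ∀ s ≤ t, 0 ≤ g t s := fun t s hs =>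
    mul_nonneg (hf_nonneg s) (Real.rpow_nonneg (sub_nonneg.2 hs) _)
  have hg_int : ∀ t T, IntegrableOn (g t) (Ioc T t) := by
    intro t T
    rcases le_or_gt t T with h | h
    · rw [Ioc_eq_empty (not_lt.2 h)]
      exact integrableOn_empty
    obtain ⟨K, hK⟩ := hf_locbdd T t
    refine (integrableOn_Ioc_sub_rpow hα0 h.le).bdd_mul (c := K) hf_meas.aestronglyMeasurable ?_
    filter_upwards [ae_restrict_mem measurableSet_Ioc] with s hs
    exact hK s ⟨hs.1.le, hs.2⟩
  have hI : ∀ t, IntegrableOn (g t) (Iic t) ∧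
      Tendsto (fun T => ∫ s in Ioc T t, g t s) atBot (𝓝 (∫ s in Iic t, g t s)) := fun t =>
    integrableOn_Iic_and_tendsto_of_integral_Ioc_le (C := Real.Gamma α * u t) (hg_nonneg t)
      (hg_int t) fun T hT => sub_nonneg.1 (hE_nonneg T t hT)
  set L : ℝ → ℝ := fun t => Real.Gamma α * u t - ∫ s in Iic t, g t s with hL
  have hEL : ∀ t, Tendsto (E t) atBot (𝓝 (L t)) := fun t => (hI t).2.const_sub _
  have hL_nonneg : ∀ t, 0 ≤ L t := fun t =>
    ge_of_tendsto (hEL t) ((eventually_lt_atBot t).mono fun T hT => hE_nonneg T t hT)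
  have hL_eq : ∀ t t', t ≤ t' → L t = L t' := by
    intro t t' htt'
    have hx := tendsto_sub_div_sub_atBot t t'
    have hpow : ∀ p : ℝ, Tendsto (fun T => ((t - T) / (t' - T)) ^ p * E t' T) atBot
        (𝓝 (L t')) := fun p => by
      simpa using (hx.rpow_const (p := p) (Or.inl one_ne_zero)).mul (hEL t')
    refine le_antisymm (le_of_tendsto_of_tendsto (hEL t) (hpow (α - 1)) ?_)
      (le_of_tendsto_of_tendsto (hpow α) (hEL t) ?_)
    · exact (eventually_lt_atBot t).mono fun T hT => (hharnack T t t' hT htt').2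
    · exact (eventually_lt_atBot t).mono fun T hT => (hharnack T t t' hT htt').1
  have hL_const : ∀ t, L t = L 0 := fun t =>
    (le_total t 0).elim (hL_eq t 0) fun h => (hL_eq 0 t h).symm
  refine ⟨L 0 / Real.Gamma α, div_nonneg (hL_nonneg 0) hG.le, fun t =>
    ⟨(hI t).1.mono_set Iio_subset_Iic_self, ?_⟩⟩
  rw [← hL_const t, ← integral_Iic_eq_integral_Iio, hL]
  field_simp
  ring
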